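/- There is an absolute constant C with the following property. Let p be an odd prime, r ≥ 1, q = p^r. Let f(x,y) = A x² + 2B x y + C y² and f₁(x,y) = A₁ x² + 2B₁ x y + C₁ y² be integral binary quadratic forms with p ∤ A, p ∤ A₁, AC − B² = a², A₁C₁ − B₁² = a₁² for nonzero integers a, a₁, and let u, v, u₁, v₁ be integers. Define the normalized sums S_f(q,b,u,v) = q^{−2} ∑_{x=0}^{q−1} ∑_{y=0}^{q−1} e_q(b·(f(x,y) − a) + u x + v y) and similarly S_{f₁}(q,b,u₁,v₁) with a replaced by a₁. Then |∑_{b=1, gcd(b,p)=1}^{q} S_f(q,b,u,v) · conj(S_{f₁}(q,b,u₁,v₁))| ≤ C · gcd(a², q)^{1/2} · gcd(a₁², q)^{1/2} · gcd(a − a₁, q)^{1/4} · q^{−5/4}. -/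

import Mathlib

/-!
Completing the squares in `S_f` (possible because `2` and `A` are units mod `q`) gives, up to a
constant factor of modulus at most one, two quadratic Gauss sums times `e_q(-a b + κ b⁻¹)`. As a
function of the unit `b` the Gauss sums depend only on `b` modulo squares, and they are bounded by
`q^{1/2}` and `q^{1/2} gcd(AC - B², q)^{1/2}`. The correlation is therefore a Kloosterman sum
`∑ W(b) e_q(-(a - a₁) b + m b⁻¹)` with a weight `W` invariant under multiplication by squares.

Invariance under squares is enough for the elementary bounds of Kloosterman sums. For `q = p` the
sum is unchanged under `(n, m) ↦ (n t², m t⁻²)`, and its fourth moment over `(n, m)` is small, which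
gives `O(q^{3/4})`. For higher powers, `1 + p^k t` is a square and the sum localizes at the
stationary points of the phase, unless `p` divides both parameters, in which case the sum is `p`
times one modulo `q/p`. The resulting bound `q^{3/4} gcd(a - a₁, q)^{1/4}` accounts for the
exponents `-5/4` and `1/4`.
-/

/-- The additive character `e_q(x) = exp(2πi x / q)`. -/
noncomputable def eChar (q : ℕ) (x : ℤ) : ℂ :=
  Complex.exp (2 * Real.pi * Complex.I * (x : ℂ) / (q : ℂ))

/-- The normalized complete exponential sum
`S_f(q,b,u,v) = q⁻² ∑_{x,y mod q} e_q(b(f(x,y) − a) + ux + vy)` attached to the binary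
quadratic form `f = A x² + 2B x y + C y²` (shifted by `a`). -/
noncomputable def Sform (q : ℕ) (A B C a b u v : ℤ) : ℂ :=
  ((q : ℂ) ^ 2)⁻¹ * ∑ x ∈ Finset.range q, ∑ y ∈ Finset.range q,
    eChar q (b * (A * (x : ℤ) ^ 2 + 2 * B * x * y + C * y ^ 2 - a) + u * x + v * y)

open Finset ZMod
open scoped ComplexConjugate

section SquareInvariant

variable {G H α : Type*} [Group G] [Group H]

/-- A function on a group is square-invariant if it depends only on the argument modulo squares.
Quadratic Gauss sums `∑ ψ(b c x²)` are square-invariant in the unit `b`, and this is all that the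
estimates below use about them, in place of their evaluation by Legendre symbols. -/
def IsSquareInvariant (W : G → α) : Prop :=
  ∀ b s, W (b * s ^ 2) = W b

lemma IsSquareInvariant.of_comp_surjective {W : H → α} {f : G →* H}
    (hf : Function.Surjective f) (h : IsSquareInvariant (W ∘ f)) : IsSquareInvariant W :=
  hf.forall.mpr fun b ↦ hf.forall.mpr fun s ↦ by simpa using h b s

end SquareInvariant

section Counting

lemma sum_comp_le_of_card_fiber_le {α β : Type*} [Fintype α] [Fintype β] [DecidableEq β]
    {g : α → β} {k : ℕ} (hg : ∀ x, #{t | g t = x} ≤ k) {F : β → ℝ} (hF : ∀ x, 0 ≤ F x) :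
    ∑ t, F (g t) ≤ k * ∑ x, F x := by
  rw [sum_comp F g, mul_sum]
  calc ∑ x ∈ univ.image g, #{t | g t = x} • F x
      ≤ ∑ x ∈ univ.image g, k * F x := sum_le_sum fun x _ ↦ by
        rw [nsmul_eq_mul]
        exact mul_le_mul_of_nonneg_right (mod_cast hg x) (hF x)
    _ ≤ ∑ x, k * F x := sum_le_univ_sum_of_nonneg fun x ↦ mul_nonneg k.cast_nonneg (hF x)

lemma card_mul_sum_comp_of_surjective {G H : Type*} [Group G] [Group H] [Fintype G] [Fintype H]
    {K : Type*} [CommSemiring K] {f : G →* H} (hf : Function.Surjective f) (F : H → K) :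
    Fintype.card H * ∑ g, F (f g) = Fintype.card G * ∑ h, F h := by
  classical
  have card_fiber (h : H) : #{g | f g = h} = #{g | f g = 1} :=
    MonoidHom.card_fiber_eq_of_mem_range f (hf h) (hf 1)
  have card_eq : Fintype.card G = Fintype.card H * #{g | f g = 1} := by
    rw [← card_univ, card_eq_sum_card_fiberwise (f := f) (t := univ) (by simp)]
    simp [card_fiber]
  rw [sum_comp F f, image_univ_of_surjective hf, card_eq]
  simp_rw [card_fiber, ← smul_sum, nsmul_eq_mul]
  push_cast
  ring

lemma card_mul_eq_zero_le_gcd {N : ℕ} [NeZero N] (c : ℤ) :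
    #{x : ZMod N | (c : ZMod N) * x = 0} ≤ Int.gcd c N := by
  have gcd_pos : 0 < Int.gcd c N := Int.gcd_pos_of_ne_zero_right _ (mod_cast NeZero.ne N)
  refine (card_le_card fun x hx ↦ ?_).trans (IsAddCyclic.card_nsmul_eq_zero_le gcd_pos)
  have bezout : ((Int.gcd c N : ℤ) : ZMod N) = c * (Int.gcdA c N : ℤ) := by
    rw [Int.gcd_eq_gcd_ab]
    simp
  rw [mem_filter_univ] at hx ⊢
  rw [nsmul_eq_mul, ← Int.cast_natCast, bezout, mul_right_comm, hx, zero_mul]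

end Counting

section AdditiveCharacter

lemma norm_sum_le_card_mul {ι E : Type*} [SeminormedAddCommGroup E] {s : Finset ι} {f : ι → E}
    {M : ℝ} (h : ∀ i ∈ s, ‖f i‖ ≤ M) : ‖∑ i ∈ s, f i‖ ≤ #s * M :=
  (norm_sum_le_of_le s h).trans_eq (by rw [sum_const, nsmul_eq_mul])

variable {R : Type*} [CommRing R] {ψ : AddChar R ℂ}

lemma sum_sum_mul_apply_mul [Fintype R] [DecidableEq R] (hψ : ψ.IsPrimitive) {ι : Type*}
    (s : Finset ι) (w : ι → ℂ) (c : ι → R) :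
    ∑ t, ∑ i ∈ s, w i * ψ (t * c i) = Fintype.card R * ∑ i ∈ s with c i = 0, w i := by
  rw [sum_comm, sum_filter, mul_sum]
  refine sum_congr rfl fun i _ ↦ ?_
  rw [← mul_sum, AddChar.sum_mulShift _ hψ]
  split_ifs <;> ring

/-- A character of `R/(c)` that is nontrivial at `v` lifts to `R`, where it has the form
`x ↦ ψ (t x)`. -/
lemma exists_mul_eq_zero_and_apply_mul_ne_one [Finite R] (hψ : ψ.IsPrimitive) {c v : R}
    (h : ¬ c ∣ v) : ∃ t, t * c = 0 ∧ ψ (t * v) ≠ 1 := by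
  have := Fintype.ofFinite R
  have mulShift_bijective : Function.Bijective ψ.mulShift :=
    (Fintype.bijective_iff_injective_and_card _).mpr
      ⟨AddChar.to_mulShift_inj_of_isPrimitive hψ, AddChar.card_eq.symm⟩
  let I := Ideal.span {c}
  have mk_ne_zero : Ideal.Quotient.mk I v ≠ 0 := by
    rwa [Ne, Ideal.Quotient.eq_zero_iff_mem, Ideal.mem_span_singleton]
  have : Finite (R ⧸ I) := Quotient.finite _
  obtain ⟨φ, hφ⟩ := AddChar.exists_apply_ne_zero.mpr mk_ne_zero
  obtain ⟨t, ht⟩ := mulShift_bijective.2 (φ.compAddMonoidHom (Ideal.Quotient.mk I).toAddMonoidHom)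
  have apply_mul (x : R) : ψ (t * x) = φ (Ideal.Quotient.mk I x) := congr($ht x)
  refine ⟨t, ?_, by rwa [apply_mul]⟩
  by_contra htc
  refine hψ htc (DFunLike.ext _ _ fun x ↦ ?_)
  have : Ideal.Quotient.mk I (c * x) = 0 :=
    Ideal.Quotient.eq_zero_iff_mem.mpr (Ideal.mem_span_singleton.mpr (dvd_mul_right c x))
  rw [AddChar.mulShift_apply, mul_assoc, apply_mul, this, AddChar.map_zero_eq_one,
    AddChar.one_apply]

lemma sum_sum_norm_sq_le [Fintype R] [DecidableEq R] (hψ : ψ.IsPrimitive) {ι : Type*} [Fintype ι]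
    {w : ι → ℂ} {M : ℝ} (hw : ∀ i, ‖w i‖ ≤ M) (s h : ι → R) :
    ∑ n, ∑ m, ‖∑ i, w i * ψ (n * s i + m * h i)‖ ^ 2 ≤
      M ^ 2 * Fintype.card R ^ 2 * #{x : ι × ι | s x.1 = s x.2 ∧ h x.1 = h x.2} := by
  set D : Finset (ι × ι) := {x | s x.1 = s x.2 ∧ h x.1 = h x.2} with hD
  have expand (n m : R) : (‖∑ i, w i * ψ (n * s i + m * h i)‖ : ℂ) ^ 2 =
      ∑ x : ι × ι, w x.1 * conj (w x.2) * ψ (n * (s x.1 - s x.2)) * ψ (m * (h x.1 - h x.2)) := by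
    rw [← Complex.mul_conj', map_sum, sum_mul_sum, Fintype.sum_prod_type]
    refine sum_congr rfl fun i _ ↦ sum_congr rfl fun j _ ↦ ?_
    rw [map_mul, ← AddChar.map_neg_eq_conj, mul_mul_mul_comm, mul_assoc (w i * _),
      ← AddChar.map_add_eq_mul, ← AddChar.map_add_eq_mul]
    congr 2
    ring
  have orthogonality : ((∑ n, ∑ m, ‖∑ i, w i * ψ (n * s i + m * h i)‖ ^ 2 : ℝ) : ℂ) =
      Fintype.card R ^ 2 * ∑ x ∈ D, w x.1 * conj (w x.2) := by
    push_cast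
    simp_rw [expand, sum_sum_mul_apply_mul hψ, ← mul_sum, sum_sum_mul_apply_mul hψ, sub_eq_zero,
      filter_filter, hD, and_comm]
    ring
  have diagonal_le : ‖∑ x ∈ D, w x.1 * conj (w x.2)‖ ≤ #D * M ^ 2 :=
    norm_sum_le_card_mul fun x _ ↦ by
      rw [norm_mul, RCLike.norm_conj, sq]
      exact mul_le_mul (hw _) (hw _) (norm_nonneg _) ((norm_nonneg _).trans (hw x.1))
  calc ∑ n, ∑ m, ‖∑ i, w i * ψ (n * s i + m * h i)‖ ^ 2
      = Fintype.card R ^ 2 * ‖∑ x ∈ D, w x.1 * conj (w x.2)‖ := by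
        rw [← Complex.norm_of_nonneg (r := ∑ n, ∑ m, _) (by positivity), orthogonality, norm_mul,
          norm_pow, Complex.norm_natCast]
    _ ≤ Fintype.card R ^ 2 * (#D * M ^ 2) := by gcongr
    _ = M ^ 2 * Fintype.card R ^ 2 * #D := by ring

end AdditiveCharacter

section TwistedKloostermanSum

variable {R : Type*} [CommRing R] [Fintype R] [DecidableEq R]

/-- The Kloosterman sum `∑ W(b) ψ(n b + m b⁻¹)` over the units `b` of a finite commutative ring,
with weight `W`. The correlation of two normalized Gauss sums is such a sum. -/
noncomputable def twistedKloostermanSum (ψ : AddChar R ℂ) (W : Rˣ → ℂ) (n m : R) : ℂ :=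
  ∑ b : Rˣ, W b * ψ (n * b + m * ↑b⁻¹)

variable {ψ : AddChar R ℂ} {W : Rˣ → ℂ} {M : ℝ}

lemma norm_twistedKloostermanSum_le_card (hW : ∀ b, ‖W b‖ ≤ M) (n m : R) :
    ‖twistedKloostermanSum ψ W n m‖ ≤ Fintype.card Rˣ * M :=
  norm_sum_le_card_mul fun b _ ↦ by simpa using hW b

lemma twistedKloostermanSum_mul_sq (hW : IsSquareInvariant W) (n m : R) (t : Rˣ) :
    twistedKloostermanSum ψ W (n * ↑(t ^ 2)) (m * ↑(t ^ 2)⁻¹) = twistedKloostermanSum ψ W n m := by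
  refine Fintype.sum_equiv (Equiv.mulRight (t ^ 2)) _ _ fun b ↦ ?_
  rw [Equiv.coe_mulRight, hW, mul_inv]
  congr 2
  push_cast
  ring

lemma twistedKloostermanSum_sq (n m : R) :
    twistedKloostermanSum ψ W n m ^ 2 =
      ∑ x : Rˣ × Rˣ, W x.1 * W x.2 * ψ (n * (x.1 + x.2) + m * (↑x.1⁻¹ + ↑x.2⁻¹)) := by
  rw [twistedKloostermanSum, sq, sum_mul_sum, Fintype.sum_prod_type]
  refine sum_congr rfl fun i _ ↦ sum_congr rfl fun j _ ↦ ?_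
  rw [mul_mul_mul_comm, ← AddChar.map_add_eq_mul]
  congr 2
  ring

end TwistedKloostermanSum

section Field

variable {F : Type*} [Field F]

lemma eq_neg_or_eq_or_eq_of_add_eq_add_of_inv_add_inv_eq {a b c d : F} (ha : a ≠ 0) (hb : b ≠ 0)
    (hc : c ≠ 0) (hd : d ≠ 0) (h : a + b = c + d) (h' : a⁻¹ + b⁻¹ = c⁻¹ + d⁻¹) :
    b = -a ∨ c = a ∨ c = b := by
  field_simp at h'
  obtain rfl : d = a + b - c := by rw [h]; ring
  have factored : (b + a) * ((c - a) * (c - b)) = 0 := by linear_combination -h'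
  simpa [sub_eq_zero, add_eq_zero_iff_eq_neg] using factored

variable [Fintype F] [DecidableEq F] {ψ : AddChar F ℂ} {W : Fˣ → ℂ} {M : ℝ}

lemma card_add_eq_add_inv_add_inv_eq_le :
    #{x : (Fˣ × Fˣ) × Fˣ × Fˣ | (x.1.1 + x.1.2 : F) = x.2.1 + x.2.2 ∧
      (↑x.1.1⁻¹ + ↑x.1.2⁻¹ : F) = ↑x.2.1⁻¹ + ↑x.2.2⁻¹} ≤ 3 * Fintype.card Fˣ ^ 2 := by
  have subset : ({x | (x.1.1 + x.1.2 : F) = x.2.1 + x.2.2 ∧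
      (↑x.1.1⁻¹ + ↑x.1.2⁻¹ : F) = ↑x.2.1⁻¹ + ↑x.2.2⁻¹} : Finset ((Fˣ × Fˣ) × Fˣ × Fˣ)) ⊆
      univ.image (fun y : Fˣ × Fˣ ↦ ((y.1, -y.1), (y.2, -y.2))) ∪
        (univ.image (fun y : Fˣ × Fˣ ↦ (y, y)) ∪ univ.image fun y : Fˣ × Fˣ ↦ (y, y.swap)) := by
    rintro ⟨⟨a, b⟩, c, d⟩ hx
    obtain ⟨h, h'⟩ := (mem_filter_univ _).mp hx
    simp only [Units.val_inv_eq_inv_val] at h h'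
    rcases eq_neg_or_eq_or_eq_of_add_eq_add_of_inv_add_inv_eq a.ne_zero b.ne_zero c.ne_zero
      d.ne_zero h h' with hba | hca | hcb
    · have hdc : d = -c := Units.ext (by push_cast; linear_combination hba - h)
      obtain rfl : b = -a := Units.ext (by simpa using hba)
      simp [hdc]
    · obtain rfl : c = a := Units.ext hca
      simp [Units.ext (add_left_cancel h)]
    · obtain rfl : c = b := Units.ext hcb
      have hda : d = a := Units.ext (by linear_combination -h)
      simp [hda]
  calc _ ≤ _ := card_le_card subset
    _ ≤ _ := (card_union_le _ _).trans (Nat.add_le_add_left (card_union_le _ _) _)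
    _ ≤ Fintype.card (Fˣ × Fˣ) + (Fintype.card (Fˣ × Fˣ) + Fintype.card (Fˣ × Fˣ)) := by
        gcongr <;> exact card_image_le
    _ = 3 * Fintype.card Fˣ ^ 2 := by rw [Fintype.card_prod]; ring

lemma sum_sum_norm_twistedKloostermanSum_pow_four_le (hψ : ψ.IsPrimitive) (hW : ∀ b, ‖W b‖ ≤ M) :
    ∑ n, ∑ m, ‖twistedKloostermanSum ψ W n m‖ ^ 4 ≤
      3 * M ^ 4 * Fintype.card F ^ 2 * Fintype.card Fˣ ^ 2 := by
  have weight_le (x : Fˣ × Fˣ) : ‖W x.1 * W x.2‖ ≤ M ^ 2 := by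
    rw [norm_mul, sq]
    exact mul_le_mul (hW _) (hW _) (norm_nonneg _) ((norm_nonneg _).trans (hW x.1))
  calc ∑ n, ∑ m, ‖twistedKloostermanSum ψ W n m‖ ^ 4
      = ∑ n, ∑ m, ‖twistedKloostermanSum ψ W n m ^ 2‖ ^ 2 := by simp_rw [norm_pow, ← pow_mul]
    _ ≤ (M ^ 2) ^ 2 * Fintype.card F ^ 2 * (3 * Fintype.card Fˣ ^ 2 : ℕ) := by
        simp_rw [twistedKloostermanSum_sq]
        refine (sum_sum_norm_sq_le hψ weight_le _ _).trans ?_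
        gcongr
        exact card_add_eq_add_inv_add_inv_eq_le
    _ = 3 * M ^ 4 * Fintype.card F ^ 2 * Fintype.card Fˣ ^ 2 := by push_cast; ring

lemma card_mul_sq_mul_inv_sq_eq_le {n : F} (hn : n ≠ 0) (m : F) (x : F × F) :
    #{t : Fˣ | (n * ↑(t ^ 2), m * ↑(t ^ 2)⁻¹) = x} ≤ 2 := by
  obtain hempty | ⟨t₀, ht₀⟩ := ({t : Fˣ | (n * ↑(t ^ 2), m * ↑(t ^ 2)⁻¹) = x} :
    Finset Fˣ).eq_empty_or_nonempty
  · rw [hempty, card_empty]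
    exact Nat.zero_le 2
  refine (card_le_card (t := {t₀, -t₀}) fun t ht ↦ ?_).trans card_le_two
  rw [mem_filter_univ] at ht ht₀
  have sq_eq : (t : F) ^ 2 = t₀ ^ 2 := by
    simpa [hn] using congr(Prod.fst $(ht.trans ht₀.symm))
  simpa [Units.ext_iff] using sq_eq_sq_iff_eq_or_eq_neg.mp sq_eq

/-- Kloosterman's argument: the value `‖K(n, m)‖` recurs at the points `(n t², m t⁻²)`, so it is
controlled by the fourth moment. -/
lemma norm_twistedKloostermanSum_pow_four_le (hψ : ψ.IsPrimitive) (hsq : IsSquareInvariant W)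
    (hW : ∀ b, ‖W b‖ ≤ M) {n : F} (hn : n ≠ 0) (m : F) :
    ‖twistedKloostermanSum ψ W n m‖ ^ 4 ≤ 6 * M ^ 4 * Fintype.card F ^ 3 := by
  have card_units_pos : (0 : ℝ) < Fintype.card Fˣ := mod_cast Fintype.card_pos
  have card_units_le : (Fintype.card Fˣ : ℝ) ≤ Fintype.card F :=
    mod_cast Fintype.card_le_of_injective _ Units.val_injective
  refine le_of_mul_le_mul_left ?_ card_units_pos
  calc Fintype.card Fˣ * ‖twistedKloostermanSum ψ W n m‖ ^ 4
      = ∑ t : Fˣ, ‖twistedKloostermanSum ψ W (n * ↑(t ^ 2)) (m * ↑(t ^ 2)⁻¹)‖ ^ 4 := by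
        simp_rw [twistedKloostermanSum_mul_sq hsq, sum_const, nsmul_eq_mul, card_univ]
    _ ≤ (2 : ℕ) * ∑ x : F × F, ‖twistedKloostermanSum ψ W x.1 x.2‖ ^ 4 := by
        refine sum_comp_le_of_card_fiber_le (F := fun x ↦ ‖twistedKloostermanSum ψ W x.1 x.2‖ ^ 4)
          (card_mul_sq_mul_inv_sq_eq_le hn m) fun _ ↦ ?_
        positivity
    _ ≤ 2 * (3 * M ^ 4 * Fintype.card F ^ 2 * Fintype.card Fˣ ^ 2) := by
        rw [Fintype.sum_prod_type, Nat.cast_two]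
        gcongr
        exact sum_sum_norm_twistedKloostermanSum_pow_four_le hψ hW
    _ = Fintype.card Fˣ * (6 * M ^ 4 * Fintype.card F ^ 2 * Fintype.card Fˣ) := by ring
    _ ≤ Fintype.card Fˣ * (6 * M ^ 4 * Fintype.card F ^ 2 * Fintype.card F) := by gcongr
    _ = Fintype.card Fˣ * (6 * M ^ 4 * Fintype.card F ^ 3) := by ring

end Field

section StationaryPhase

variable {R : Type*} [CommRing R] {P : R}

lemma exists_unit_sq_eq_one_add_mul (two : IsUnit (2 : R)) (hP : P ^ 2 = 0) (t : R) :
    ∃ s : Rˣ, (↑(s ^ 2) : R) = 1 + P * t ∧ (↑(s ^ 2)⁻¹ : R) = 1 - P * t := by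
  obtain ⟨h, hh⟩ := two.exists_right_inv
  refine ⟨⟨1 + P * t * h, 1 - P * t * h, ?_, ?_⟩, ?_, ?_⟩
  · linear_combination (-(t * h) ^ 2) * hP
  · linear_combination (-(t * h) ^ 2) * hP
  · simp only [Units.val_pow_eq_pow_val]
    linear_combination P * t * hh + (t * h) ^ 2 * hP
  · simp only [← inv_pow, Units.val_pow_eq_pow_val, Units.inv_mk]
    linear_combination -(P * t) * hh + (t * h) ^ 2 * hP

variable [Fintype R] [DecidableEq R] {ψ : AddChar R ℂ} {W : Rˣ → ℂ} {M : ℝ} {n m : R}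

/-- Units congruent to `1` modulo `P` are squares, so translating by them costs only the linear term
of the phase. -/
lemma twistedKloostermanSum_eq_sum_stationary (hψ : ψ.IsPrimitive) (two : IsUnit (2 : R))
    (hP : P ^ 2 = 0) (hsq : IsSquareInvariant W) :
    twistedKloostermanSum ψ W n m =
      ∑ b ∈ {b : Rˣ | P * (n * b - m * ↑b⁻¹) = 0}, W b * ψ (n * b + m * ↑b⁻¹) := by
  have translate (t : R) : twistedKloostermanSum ψ W n m =
      ∑ b : Rˣ, W b * ψ (n * b + m * ↑b⁻¹) * ψ (t * (P * (n * b - m * ↑b⁻¹))) := by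
    obtain ⟨s, hs, hs_inv⟩ := exists_unit_sq_eq_one_add_mul two hP t
    rw [← twistedKloostermanSum_mul_sq hsq n m s, hs, hs_inv]
    refine sum_congr rfl fun b _ ↦ ?_
    rw [mul_assoc (W b), ← AddChar.map_add_eq_mul]
    congr 2
    ring
  refine mul_left_cancel₀ (Nat.cast_ne_zero.mpr (Fintype.card_ne_zero (α := R))) ?_
  rw [← sum_sum_mul_apply_mul hψ, ← sum_congr rfl fun t _ ↦ translate t, sum_const, nsmul_eq_mul,
    card_univ]

lemma card_stationary_le [IsLocalRing R] (two : IsUnit (2 : R)) (hnm : IsUnit n ∨ IsUnit m) :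
    #{b : Rˣ | P * (n * b - m * ↑b⁻¹) = 0} ≤ 2 * #{x | P * x = 0} := by
  obtain hempty | ⟨b₀, hb₀⟩ := ({b : Rˣ | P * (n * b - m * ↑b⁻¹) = 0} :
    Finset Rˣ).eq_empty_or_nonempty
  · rw [hempty, card_empty]
    exact Nat.zero_le _
  have subset : ({b : Rˣ | P * (n * b - m * ↑b⁻¹) = 0} : Finset Rˣ).image Units.val ⊆
      ({x | P * x = 0} : Finset R).image (· + ↑b₀) ∪
        ({x | P * x = 0} : Finset R).image (· - ↑b₀) := by
    rw [image_subset_iff]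
    intro b hb
    rw [mem_filter_univ] at hb hb₀
    have mul_sub_mul_add : P * ((b - b₀) * (b + b₀)) = 0 := by
      have h := b.mul_inv
      have h₀ := b₀.mul_inv
      rcases hnm with hn | hm
      · refine hn.mul_left_cancel ?_
        linear_combination b * hb - b₀ * hb₀ + P * m * (h - h₀)
      · refine hm.mul_left_cancel ?_
        linear_combination b₀ ^ 2 * b * hb - b₀ * b ^ 2 * hb₀ + P * m * (b₀ ^ 2 * h - b ^ 2 * h₀)
    have : IsUnit ((b - b₀ : R) + (b + b₀)) := by
      rw [sub_add_add_cancel, ← two_mul]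
      exact two.mul b.isUnit
    simp only [mem_union, mem_image, mem_filter_univ]
    rcases IsLocalRing.isUnit_or_isUnit_of_isUnit_add this with hsub | hadd
    · exact .inr ⟨b + b₀, hsub.mul_left_cancel (by linear_combination mul_sub_mul_add), by ring⟩
    · exact .inl ⟨b - b₀, hadd.mul_left_cancel (by linear_combination mul_sub_mul_add), by ring⟩
  rw [← card_image_of_injective _ Units.val_injective, two_mul]
  exact (card_le_card subset).trans
    ((card_union_le _ _).trans (add_le_add card_image_le card_image_le))

lemma norm_twistedKloostermanSum_le_of_sq_eq_zero [IsLocalRing R] (hψ : ψ.IsPrimitive)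
    (two : IsUnit (2 : R)) (hP : P ^ 2 = 0) (hsq : IsSquareInvariant W) (hW : ∀ b, ‖W b‖ ≤ M)
    (hnm : IsUnit n ∨ IsUnit m) :
    ‖twistedKloostermanSum ψ W n m‖ ≤ 2 * #{x | P * x = 0} * M := by
  rw [twistedKloostermanSum_eq_sum_stationary hψ two hP hsq]
  refine (norm_sum_le_card_mul (M := M) fun b _ ↦ by simpa using hW b).trans ?_
  have := (norm_nonneg _).trans (hW 1)
  gcongr
  exact_mod_cast card_stationary_le two hnm

end StationaryPhase

section PrimePower

lemma stdAddChar_mul_eq_stdAddChar_castHom {N M d : ℕ} [NeZero N] [NeZero M] (hN : N = d * M)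
    (h : M ∣ N) (x : ZMod N) :
    stdAddChar ((d : ZMod N) * x) = stdAddChar (castHom h (ZMod M) x) := by
  obtain ⟨z, rfl⟩ := intCast_surjective x
  rw [map_intCast, ← Int.cast_natCast d, ← Int.cast_mul, stdAddChar_coe, stdAddChar_coe, hN]
  have hd : (d : ℂ) ≠ 0 := by rintro hd; simp_all
  congr 1
  push_cast
  field_simp

lemma natCast_dvd_of_castHom_eq_zero {N M : ℕ} (h : M ∣ N) {x : ZMod N}
    (hx : castHom h (ZMod M) x = 0) : (M : ZMod N) ∣ x := by
  obtain ⟨z, rfl⟩ := intCast_surjective x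
  rw [map_intCast, intCast_zmod_eq_zero_iff_dvd] at hx
  simpa using (Int.castRingHom (ZMod N)).map_dvd hx

lemma card_units_mul_twistedKloostermanSum_comp_unitsMap {N M d : ℕ} [NeZero N] [NeZero M]
    (hN : N = d * M) (h : M ∣ N) (W : (ZMod M)ˣ → ℂ) (n m : ℤ) :
    Fintype.card (ZMod M)ˣ * twistedKloostermanSum (stdAddChar (N := N)) (W ∘ unitsMap h)
        (d * n : ℤ) (d * m : ℤ) =
      Fintype.card (ZMod N)ˣ * twistedKloostermanSum (stdAddChar (N := M)) W n m := by
  simp_rw [twistedKloostermanSum]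
  rw [← card_mul_sum_comp_of_surjective (unitsMap_surjective h)]
  congr 1
  refine sum_congr rfl fun b _ ↦ ?_
  have factor : (((d * n : ℤ) : ZMod N) * b + ((d * m : ℤ) : ZMod N) * ↑b⁻¹ : ZMod N) =
      d * (n * b + m * ↑b⁻¹) := by
    push_cast
    ring
  rw [factor, stdAddChar_mul_eq_stdAddChar_castHom hN h, map_add, map_mul, map_mul, map_intCast,
    map_intCast, ← map_inv]
  rfl

lemma IsSquareInvariant.factorsThrough_unitsMap {N M : ℕ} {α : Type*} (h : M ∣ N) (hN : N ∣ M ^ 2)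
    (two : IsUnit (2 : ZMod N)) {V : (ZMod N)ˣ → α} (hV : IsSquareInvariant V) :
    V.FactorsThrough (unitsMap h) := by
  intro b c hbc
  have hM : (M : ZMod N) ^ 2 = 0 := by rwa [← Nat.cast_pow, natCast_eq_zero_iff]
  have map_eq_one : unitsMap h (b⁻¹ * c) = 1 := by rw [map_mul, map_inv, hbc, inv_mul_cancel]
  obtain ⟨t, ht⟩ : (M : ZMod N) ∣ ↑(b⁻¹ * c) - 1 :=
    natCast_dvd_of_castHom_eq_zero h <| by
      rw [map_sub, map_one, sub_eq_zero]
      exact congr(Units.val $map_eq_one)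
  obtain ⟨s, hs, -⟩ := exists_unit_sq_eq_one_add_mul two hM t
  obtain rfl : c = b * s ^ 2 := by
    rw [← inv_mul_eq_iff_eq_mul]
    exact Units.ext (by rw [hs, ← ht, add_sub_cancel])
  exact (hV b s).symm

end PrimePower

section KloostermanPrimePower

variable {p : ℕ} [Fact p.Prime]

lemma isUnit_intCast_primePow {n : ℤ} (hn : ¬ (p : ℤ) ∣ n) (s : ℕ) :
    IsUnit (n : ZMod (p ^ s)) := by
  rw [coe_int_isUnit_iff_isCoprime]
  push_cast
  exact ((Prime.coprime_iff_not_dvd (Nat.prime_iff_prime_int.mp Fact.out)).mpr hn).pow_left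

lemma isUnit_two_primePow (hp : p ≠ 2) (s : ℕ) : IsUnit (2 : ZMod (p ^ s)) := by
  refine mod_cast isUnit_intCast_primePow (p := p) (n := 2) ?_ s
  exact_mod_cast (Nat.prime_dvd_prime_iff_eq Fact.out Nat.prime_two).not.mpr hp

lemma isLocalRing_primePow (s : ℕ) [Nontrivial (ZMod (p ^ s))] : IsLocalRing (ZMod (p ^ s)) :=
  .of_isUnit_or_isUnit_one_sub_self fun x ↦ by
    obtain ⟨z, rfl⟩ := intCast_surjective x
    by_cases hz : (p : ℤ) ∣ z
    · refine .inr (mod_cast isUnit_intCast_primePow (n := 1 - z) (fun h ↦ ?_) s)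
      exact (Nat.prime_iff_prime_int.mp Fact.out).not_dvd_one ((dvd_sub_left hz).mp h)
    · exact .inl (isUnit_intCast_primePow hz s)

lemma twistedKloostermanSum_comp_unitsMap_primePow {r : ℕ} (h : p ^ (r + 1) ∣ p ^ (r + 2))
    (W : (ZMod (p ^ (r + 1)))ˣ → ℂ) (n m : ℤ) :
    twistedKloostermanSum stdAddChar (W ∘ unitsMap h) (p * n : ℤ) (p * m : ℤ) =
      p * twistedKloostermanSum stdAddChar W n m := by
  have card_ne_zero : (Fintype.card (ZMod (p ^ (r + 1)))ˣ : ℂ) ≠ 0 :=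
    Nat.cast_ne_zero.mpr Fintype.card_ne_zero
  have card_eq : Fintype.card (ZMod (p ^ (r + 2)))ˣ = Fintype.card (ZMod (p ^ (r + 1)))ˣ * p := by
    rw [card_units_eq_totient, card_units_eq_totient, Nat.totient_prime_pow_succ Fact.out,
      Nat.totient_prime_pow_succ Fact.out, pow_succ]
    ring
  refine mul_left_cancel₀ card_ne_zero ?_
  rw [card_units_mul_twistedKloostermanSum_comp_unitsMap (pow_succ' p (r + 1)) h, card_eq]
  push_cast
  ring

variable {M : ℝ}

lemma norm_twistedKloostermanSum_prime_pow_four_le {W : (ZMod (p ^ 1))ˣ → ℂ}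
    (hsq : IsSquareInvariant W) (hW : ∀ b, ‖W b‖ ≤ M) (n m : ℤ) :
    ‖twistedKloostermanSum stdAddChar W n m‖ ^ 4 ≤
      16 * M ^ 4 * ((p : ℝ) ^ 1) ^ 3 * Int.gcd n ((p : ℤ) ^ 1) := by
  have M_nonneg : 0 ≤ M := (norm_nonneg _).trans (hW 1)
  by_cases hn : (p : ℤ) ∣ n
  · have card_units_le : (Fintype.card (ZMod (p ^ 1))ˣ : ℝ) ≤ p := by
      rw [card_units_eq_totient, pow_one]
      exact_mod_cast Nat.totient_le p
    have gcd_eq : Int.gcd n ((p : ℤ) ^ 1) = p := by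
      rw [pow_one, Int.gcd_eq_natAbs_right hn, Int.natAbs_natCast]
    calc ‖twistedKloostermanSum stdAddChar W n m‖ ^ 4
        ≤ (Fintype.card (ZMod (p ^ 1))ˣ * M) ^ 4 := by
          gcongr
          exact norm_twistedKloostermanSum_le_card hW _ _
      _ ≤ (p * M) ^ 4 := by gcongr
      _ ≤ 16 * (p * M) ^ 4 := le_mul_of_one_le_left (by positivity) (by norm_num)
      _ = 16 * M ^ 4 * ((p : ℝ) ^ 1) ^ 3 * Int.gcd n ((p : ℤ) ^ 1) := by rw [gcd_eq]; ring
  · have : Fact (p ^ 1).Prime := ⟨by simpa using Fact.out⟩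
    have gcd_eq : Int.gcd n ((p : ℤ) ^ 1) = 1 := by
      rw [pow_one, Int.gcd_comm, ← Int.isCoprime_iff_gcd_eq_one]
      exact (Prime.coprime_iff_not_dvd (Nat.prime_iff_prime_int.mp Fact.out)).mpr hn
    have n_ne_zero : (n : ZMod (p ^ 1)) ≠ 0 := (isUnit_intCast_primePow hn 1).ne_zero
    calc ‖twistedKloostermanSum stdAddChar W n m‖ ^ 4
        ≤ 6 * M ^ 4 * Fintype.card (ZMod (p ^ 1)) ^ 3 :=
          norm_twistedKloostermanSum_pow_four_le (isPrimitive_stdAddChar _) hsq hW n_ne_zero _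
      _ ≤ 16 * M ^ 4 * ((p : ℝ) ^ 1) ^ 3 * Int.gcd n ((p : ℤ) ^ 1) := by
          rw [gcd_eq, ZMod.card, Nat.cast_one, mul_one, Nat.cast_pow]
          gcongr
          norm_num

lemma norm_twistedKloostermanSum_primePow_pow_four_le_of_not_dvd (hp : p ≠ 2) {s : ℕ} (hs : 2 ≤ s)
    {W : (ZMod (p ^ s))ˣ → ℂ} (hsq : IsSquareInvariant W) (hW : ∀ b, ‖W b‖ ≤ M) {n m : ℤ}
    (hnm : ¬ ((p : ℤ) ∣ n ∧ (p : ℤ) ∣ m)) :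
    ‖twistedKloostermanSum stdAddChar W n m‖ ^ 4 ≤ 16 * M ^ 4 * ((p : ℝ) ^ s) ^ 3 := by
  have M_nonneg : 0 ≤ M := (norm_nonneg _).trans (hW 1)
  have one_le_p : (1 : ℝ) ≤ p := mod_cast (Fact.out : p.Prime).one_le
  have : Fact (1 < p ^ s) := ⟨one_lt_pow₀ (Fact.out : p.Prime).one_lt (by lia)⟩
  have := isLocalRing_primePow (p := p) s
  obtain ⟨k, hsk, hks⟩ : ∃ k, s ≤ k * 2 ∧ k * 4 ≤ s * 3 := ⟨(s + 1) / 2, by lia, by lia⟩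
  set P := (((p ^ k : ℕ) : ℤ) : ZMod (p ^ s)) with hP
  have P_sq : P ^ 2 = 0 := by
    rw [hP, Int.cast_natCast, ← Nat.cast_pow, natCast_eq_zero_iff, ← pow_mul]
    exact pow_dvd_pow p hsk
  have card_le : #{x | P * x = 0} ≤ p ^ k := by
    refine (card_mul_eq_zero_le_gcd _).trans ?_
    exact Nat.gcd_le_left _ (pow_pos (Fact.out : p.Prime).pos k)
  have isUnit_or : IsUnit (n : ZMod (p ^ s)) ∨ IsUnit (m : ZMod (p ^ s)) :=
    (not_and_or.mp hnm).imp (isUnit_intCast_primePow · s) (isUnit_intCast_primePow · s)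
  calc ‖twistedKloostermanSum stdAddChar W n m‖ ^ 4
      ≤ (2 * #{x | P * x = 0} * M) ^ 4 := by
        gcongr
        exact norm_twistedKloostermanSum_le_of_sq_eq_zero (isPrimitive_stdAddChar _)
          (isUnit_two_primePow hp s) P_sq hsq hW isUnit_or
    _ ≤ (2 * (p ^ k : ℕ) * M) ^ 4 := by gcongr
    _ = 16 * M ^ 4 * (p : ℝ) ^ (k * 4) := by push_cast; ring
    _ ≤ 16 * M ^ 4 * (p : ℝ) ^ (s * 3) := by gcongr
    _ = 16 * M ^ 4 * ((p : ℝ) ^ s) ^ 3 := by rw [pow_mul]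

lemma norm_twistedKloostermanSum_primePow_pow_four_le (hp : p ≠ 2) (r : ℕ)
    {W : (ZMod (p ^ (r + 1)))ˣ → ℂ} (hsq : IsSquareInvariant W) (hW : ∀ b, ‖W b‖ ≤ M) (n m : ℤ) :
    ‖twistedKloostermanSum stdAddChar W n m‖ ^ 4 ≤
      16 * M ^ 4 * ((p : ℝ) ^ (r + 1)) ^ 3 * Int.gcd n ((p : ℤ) ^ (r + 1)) := by
  induction r generalizing n m with
  | zero => exact norm_twistedKloostermanSum_prime_pow_four_le hsq hW n m
  | succ r ih =>
    by_cases hnm : (p : ℤ) ∣ n ∧ (p : ℤ) ∣ m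
    · obtain ⟨⟨n, rfl⟩, m, rfl⟩ := hnm
      have dvd : p ^ (r + 1) ∣ p ^ (r + 2) := pow_dvd_pow p (by lia)
      have dvd_sq : p ^ (r + 2) ∣ (p ^ (r + 1)) ^ 2 := by
        rw [← pow_mul]
        exact pow_dvd_pow p (by lia)
      have factors := hsq.factorsThrough_unitsMap dvd dvd_sq (isUnit_two_primePow hp _)
      obtain ⟨V, rfl⟩ := (Function.factorsThrough_iff W).mp factors
      have surjective := unitsMap_surjective dvd
      have gcd_eq : Int.gcd (p * n) ((p : ℤ) ^ (r + 2)) = p * Int.gcd n ((p : ℤ) ^ (r + 1)) := by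
        rw [pow_succ', Int.gcd_mul_left, Int.natAbs_natCast]
      calc ‖twistedKloostermanSum stdAddChar (V ∘ unitsMap dvd) (p * n : ℤ) (p * m : ℤ)‖ ^ 4
          = p ^ 4 * ‖twistedKloostermanSum stdAddChar V n m‖ ^ 4 := by
            rw [twistedKloostermanSum_comp_unitsMap_primePow, norm_mul, mul_pow,
              Complex.norm_natCast]
        _ ≤ p ^ 4 * (16 * M ^ 4 * ((p : ℝ) ^ (r + 1)) ^ 3 * Int.gcd n ((p : ℤ) ^ (r + 1))) := by
            gcongr
            exact ih (hsq.of_comp_surjective surjective) (surjective.forall.mpr hW) n m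
        _ = _ := by
            rw [gcd_eq]
            push_cast
            ring
    · have one_le_gcd : (1 : ℝ) ≤ Int.gcd n ((p : ℤ) ^ (r + 2)) :=
        Nat.one_le_cast.mpr <| Int.gcd_pos_of_ne_zero_right _ <| pow_ne_zero _ <|
          Nat.cast_ne_zero.mpr (NeZero.ne p)
      have : 0 ≤ M := (norm_nonneg _).trans (hW 1)
      exact (norm_twistedKloostermanSum_primePow_pow_four_le_of_not_dvd hp (by lia) hsq hW
        hnm).trans (le_mul_of_one_le_right (by positivity) one_le_gcd)

end KloostermanPrimePower

section QuadraticGaussSum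

variable {R : Type*} [CommRing R] [Fintype R] {ψ : AddChar R ℂ}

/-- The quadratic Gauss sum `∑ ψ(c x²)` over a finite commutative ring; `c` is not assumed to be a
unit. -/
noncomputable def quadraticGaussSum (ψ : AddChar R ℂ) (c : R) : ℂ :=
  ∑ x, ψ (c * x ^ 2)

lemma quadraticGaussSum_mul_sq (c : R) (s : Rˣ) :
    quadraticGaussSum ψ (c * s ^ 2) = quadraticGaussSum ψ c :=
  Fintype.sum_equiv s.mulLeft _ _ fun x ↦ by
    rw [Units.mulLeft_apply]
    congr 1
    ring

lemma isSquareInvariant_quadraticGaussSum_mul (c : R) :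
    IsSquareInvariant fun b : Rˣ ↦ quadraticGaussSum ψ (b * c) := fun b s ↦ by
  dsimp only
  rw [← quadraticGaussSum_mul_sq (b * c) s]
  congr 1
  push_cast
  ring

lemma sum_apply_mul_sq_add (c w : R) :
    ∑ y, ψ (c * y ^ 2 + 2 * c * w * y) = ψ (-(c * w ^ 2)) * quadraticGaussSum ψ c := by
  rw [quadraticGaussSum, mul_sum]
  refine Fintype.sum_equiv (Equiv.addRight w) _ _ fun y ↦ ?_
  rw [Equiv.coe_addRight, ← AddChar.map_add_eq_mul]
  congr 1
  ring

lemma sum_apply_mul_sq_add_eq_zero (hψ : ψ.IsPrimitive) {c v : R} (h : ¬ c ∣ v) (b : R) :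
    ∑ y, ψ (b * c * y ^ 2 + v * y) = 0 := by
  obtain ⟨t, htc, htv⟩ := exists_mul_eq_zero_and_apply_mul_ne_one hψ h
  have translate : ψ (t * v) * ∑ y, ψ (b * c * y ^ 2 + v * y) =
      ∑ y, ψ (b * c * y ^ 2 + v * y) := by
    rw [mul_sum]
    refine Fintype.sum_equiv (Equiv.addRight t) _ _ fun y ↦ ?_
    rw [Equiv.coe_addRight, ← AddChar.map_add_eq_mul]
    congr 1
    linear_combination -(b * (t + 2 * y)) * htc
  exact eq_zero_of_mul_eq_self_left htv translate

lemma exists_sum_apply_mul_sq_add_eq (hψ : ψ.IsPrimitive) (two : IsUnit (2 : R)) (c v : R) :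
    ∃ (κ : R) (δ : ℂ), ‖δ‖ ≤ 1 ∧ ∀ b : Rˣ,
      ∑ y, ψ (b * c * y ^ 2 + v * y) = δ * ψ (κ * ↑b⁻¹) * quadraticGaussSum ψ (b * c) := by
  by_cases hcv : c ∣ v
  · obtain ⟨w, rfl⟩ := hcv
    obtain ⟨h, hh⟩ := two.exists_right_inv
    refine ⟨-(c * (w * h) ^ 2), 1, norm_one.le, fun b ↦ ?_⟩
    have complete (y : R) : b * c * y ^ 2 + c * w * y =
        b * c * y ^ 2 + 2 * (b * c) * (↑b⁻¹ * w * h) * y := by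
      linear_combination -(c * w * y) * (hh + 2 * h * b.mul_inv)
    simp_rw [complete, sum_apply_mul_sq_add, one_mul]
    congr 2
    linear_combination -(c * ↑b⁻¹ * (w * h) ^ 2) * b.mul_inv
  · exact ⟨0, 0, by simp, fun b ↦ by simp [sum_apply_mul_sq_add_eq_zero hψ hcv b]⟩

lemma norm_quadraticGaussSum_sq_le [DecidableEq R] (hψ : ψ.IsPrimitive) (two : IsUnit (2 : R))
    (c : R) :
    ‖quadraticGaussSum ψ c‖ ^ 2 ≤ Fintype.card R * #{h | c * h = 0} := by
  have expand : conj (quadraticGaussSum ψ c) * quadraticGaussSum ψ c =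
      ∑ y, ∑ h, ψ (c * h ^ 2) * ψ (y * (2 * (c * h))) := by
    rw [quadraticGaussSum, map_sum, sum_mul]
    refine sum_congr rfl fun y _ ↦ ?_
    rw [mul_sum]
    refine (Fintype.sum_equiv (Equiv.addRight y) _ _ fun h ↦ ?_).symm
    rw [Equiv.coe_addRight, ← AddChar.map_neg_eq_conj, ← AddChar.map_add_eq_mul,
      ← AddChar.map_add_eq_mul]
    congr 1
    ring
  calc ‖quadraticGaussSum ψ c‖ ^ 2
      = ‖conj (quadraticGaussSum ψ c)‖ * ‖quadraticGaussSum ψ c‖ := by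
        rw [RCLike.norm_conj, sq]
    _ = Fintype.card R * ‖∑ h with c * h = 0, ψ (c * h ^ 2)‖ := by
        rw [← norm_mul, expand, sum_sum_mul_apply_mul hψ, norm_mul, Complex.norm_natCast]
        simp_rw [two.mul_right_eq_zero]
    _ ≤ Fintype.card R * #{h | c * h = 0} := by
        gcongr
        exact (norm_sum_le_card_mul (M := 1) fun h _ ↦ by simp).trans_eq (mul_one _)

variable {A : Rˣ} {B C D : R}

lemma sum_sum_apply_quadraticForm_eq_mul (hD : A * C - B ^ 2 = D) (b u v : R) :
    ∑ x, ∑ y, ψ (b * (A * x ^ 2 + 2 * B * x * y + C * y ^ 2) + u * x + v * y) =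
      (∑ x, ψ (b * A * x ^ 2 + u * x)) *
        ∑ y, ψ (b * (↑A⁻¹ * D) * y ^ 2 + (v - ↑A⁻¹ * B * u) * y) := by
  rw [sum_comm, mul_comm (∑ x, _), sum_mul_sum]
  refine sum_congr rfl fun y _ ↦ Fintype.sum_equiv (Equiv.addRight (↑A⁻¹ * B * y)) _ _ fun x ↦ ?_
  rw [Equiv.coe_addRight, ← AddChar.map_add_eq_mul]
  congr 1
  linear_combination (b * y ^ 2 * ↑A⁻¹) * hD -
    (b * C * y ^ 2 + 2 * b * B * x * y + b * B ^ 2 * y ^ 2 * ↑A⁻¹) * A.mul_inv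

lemma exists_sum_sum_apply_quadraticForm_eq (hψ : ψ.IsPrimitive) (two : IsUnit (2 : R))
    (hD : A * C - B ^ 2 = D) (u v : R) :
    ∃ (κ : R) (δ : ℂ), ‖δ‖ ≤ 1 ∧ ∀ b : Rˣ,
      ∑ x, ∑ y, ψ (b * (A * x ^ 2 + 2 * B * x * y + C * y ^ 2) + u * x + v * y) =
        δ * ψ (κ * ↑b⁻¹) *
          (quadraticGaussSum ψ (b * A) * quadraticGaussSum ψ (b * (↑A⁻¹ * D))) := by
  obtain ⟨κ₁, δ₁, hδ₁, h₁⟩ := exists_sum_apply_mul_sq_add_eq hψ two A u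
  obtain ⟨κ₂, δ₂, hδ₂, h₂⟩ :=
    exists_sum_apply_mul_sq_add_eq hψ two (↑A⁻¹ * D) (v - ↑A⁻¹ * B * u)
  refine ⟨κ₁ + κ₂, δ₁ * δ₂, ?_, fun b ↦ ?_⟩
  · rw [norm_mul]
    exact mul_le_one₀ hδ₁ (norm_nonneg _) hδ₂
  · rw [sum_sum_apply_quadraticForm_eq_mul hD, h₁, h₂, add_mul, AddChar.map_add_eq_mul]
    ring

end QuadraticGaussSum

section NormalizedGaussSum

variable {N : ℕ} [NeZero N]

lemma sum_range_natCast_zmod (F : ZMod N → ℂ) : ∑ x ∈ range N, F x = ∑ x, F x :=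
  sum_nbij' (fun x ↦ (x : ZMod N)) val (fun _ _ ↦ mem_univ _)
    (fun x _ ↦ mem_range.mpr x.val_lt) (fun _ hx ↦ val_cast_of_lt (mem_range.mp hx))
    (fun x _ ↦ natCast_zmod_val x) fun _ _ ↦ rfl

lemma sum_coprime_eq_sum_units {M : Type*} [AddCommMonoid M] [Fact (1 < N)] (F : ℕ → M) :
    ∑ b ∈ Icc 1 N with b.Coprime N, F b = ∑ b : (ZMod N)ˣ, F (b : ZMod N).val := by
  have one_lt : 1 < N := Fact.out
  refine (sum_nbij (fun b : (ZMod N)ˣ ↦ (b : ZMod N).val) (fun b _ ↦ ?_)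
    (fun b _ c _ h ↦ Units.ext (val_injective N h)) (fun b hb ↦ ?_) fun _ _ ↦ rfl).symm
  · have val_ne_zero : (b : ZMod N).val ≠ 0 := (val_ne_zero _).mpr b.ne_zero
    exact mem_filter.mpr ⟨mem_Icc.mpr ⟨Nat.one_le_iff_ne_zero.mpr val_ne_zero,
      (val_lt _).le⟩, val_coe_unit_coprime b⟩
  · obtain ⟨hbN, coprime⟩ := mem_filter.mp (mem_coe.mp hb)
    have b_ne : b ≠ N := by
      rintro rfl
      exact one_lt.ne' ((Nat.coprime_self b).mp coprime)
    exact ⟨unitOfCoprime b coprime, mem_coe.mpr (mem_univ _),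
      val_cast_of_lt ((mem_Icc.mp hbN).2.lt_of_ne b_ne)⟩

lemma eChar_eq_stdAddChar (x : ℤ) : eChar N x = stdAddChar (x : ZMod N) := by
  rw [stdAddChar_coe]
  rfl

lemma Sform_eq_sum_stdAddChar (A B C a b u v : ℤ) :
    Sform N A B C a b u v = ((N : ℂ) ^ 2)⁻¹ * (stdAddChar (-a * b : ZMod N) *
      ∑ x : ZMod N, ∑ y : ZMod N,
        stdAddChar (b * (A * x ^ 2 + 2 * B * x * y + C * y ^ 2) + u * x + v * y : ZMod N)) := by
  unfold Sform
  simp_rw [← sum_range_natCast_zmod, mul_sum, eChar_eq_stdAddChar, ← AddChar.map_add_eq_mul]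
  congr! 6 with x _ y _
  push_cast
  ring

lemma norm_quadraticGaussSum_mul_intCast_le (two : IsUnit (2 : ZMod N)) (w : (ZMod N)ˣ) (z : ℤ) :
    ‖quadraticGaussSum stdAddChar (w * z : ZMod N)‖ ≤ √(N * Int.gcd z N) := by
  refine Real.le_sqrt_of_sq_le ?_
  calc ‖quadraticGaussSum stdAddChar (w * z : ZMod N)‖ ^ 2
      ≤ Fintype.card (ZMod N) * #{h | (w * z : ZMod N) * h = 0} :=
        norm_quadraticGaussSum_sq_le (isPrimitive_stdAddChar N) two _
    _ = N * #{h | (z : ZMod N) * h = 0} := by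
        simp_rw [ZMod.card, mul_assoc, Units.mul_right_eq_zero]
    _ ≤ N * Int.gcd z N := by
        gcongr
        exact card_mul_eq_zero_le_gcd z

lemma exists_Sform_eq_mul_stdAddChar (two : IsUnit (2 : ZMod N)) {A : ℤ}
    (hA : IsUnit (A : ZMod N)) (B C a u v : ℤ) :
    ∃ (κ : ℤ) (G : (ZMod N)ˣ → ℂ), IsSquareInvariant G ∧
      (∀ b, ‖G b‖ ≤ √(Int.gcd (A * C - B ^ 2) N) / N) ∧
      ∀ b : (ZMod N)ˣ, Sform N A B C a (b : ZMod N).val u v =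
        G b * stdAddChar (-a * b + κ * ↑b⁻¹ : ZMod N) := by
  obtain ⟨A', hA'⟩ := hA
  set D := A * C - B ^ 2 with hD
  have hD' : (A' * C - B ^ 2 : ZMod N) = D := by
    rw [hA', hD]
    push_cast
    rfl
  obtain ⟨κ, δ, hδ, h⟩ :=
    exists_sum_sum_apply_quadraticForm_eq (isPrimitive_stdAddChar N) two hD' (u : ZMod N) v
  obtain ⟨κ, rfl⟩ := intCast_surjective κ
  set τ : ZMod N → ℂ := quadraticGaussSum stdAddChar
  refine ⟨κ, fun b ↦ ((N : ℂ) ^ 2)⁻¹ * (δ * (τ (b * A') * τ (b * (↑A'⁻¹ * D)))), fun b s ↦ ?_,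
    fun b ↦ ?_, fun b ↦ ?_⟩
  · have invariant (c : ZMod N) := isSquareInvariant_quadraticGaussSum_mul (ψ := stdAddChar) c b s
    simp_rw [τ, invariant]
  · have N_pos : (0 : ℝ) < N := mod_cast NeZero.pos N
    have norm_left : ‖τ (b * A')‖ ≤ √N := by
      simpa using norm_quadraticGaussSum_mul_intCast_le two (b * A') 1
    have norm_right : ‖τ (b * (↑A'⁻¹ * D))‖ ≤ √(N * Int.gcd D N) := by
      simpa [mul_assoc] using norm_quadraticGaussSum_mul_intCast_le two (b * A'⁻¹) D
    calc ‖((N : ℂ) ^ 2)⁻¹ * (δ * (τ (b * A') * τ (b * (↑A'⁻¹ * D))))‖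
        = ((N : ℝ) ^ 2)⁻¹ * (‖δ‖ * (‖τ (b * A')‖ * ‖τ (b * (↑A'⁻¹ * D))‖)) := by simp
      _ ≤ ((N : ℝ) ^ 2)⁻¹ * (1 * (√N * √(N * Int.gcd D N))) := by gcongr
      _ = √(Int.gcd D N) / N := by
        rw [Real.sqrt_mul N_pos.le, ← mul_assoc √_, Real.mul_self_sqrt N_pos.le]
        field_simp
  · rw [Sform_eq_sum_stdAddChar, AddChar.map_add_eq_mul, ← hA']
    simp only [Int.cast_natCast, natCast_zmod_val]
    rw [h]
    ring

lemma exists_sum_Sform_mul_conj_eq_twistedKloostermanSum [Fact (1 < N)]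
    (two : IsUnit (2 : ZMod N)) {A A₁ : ℤ} (hA : IsUnit (A : ZMod N)) (hA₁ : IsUnit (A₁ : ZMod N))
    (B C a u v B₁ C₁ a₁ u₁ v₁ : ℤ) :
    ∃ (m : ℤ) (W : (ZMod N)ˣ → ℂ), IsSquareInvariant W ∧
      (∀ b, ‖W b‖ ≤ √(Int.gcd (A * C - B ^ 2) N) / N * (√(Int.gcd (A₁ * C₁ - B₁ ^ 2) N) / N)) ∧
      ∑ b ∈ Icc 1 N with b.Coprime N,
          Sform N A B C a b u v * conj (Sform N A₁ B₁ C₁ a₁ b u₁ v₁) =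
        twistedKloostermanSum stdAddChar W (-(a - a₁) : ℤ) m := by
  obtain ⟨κ, G, hG, norm_G, Sform_eq⟩ := exists_Sform_eq_mul_stdAddChar two hA B C a u v
  obtain ⟨κ₁, G₁, hG₁, norm_G₁, Sform_eq₁⟩ :=
    exists_Sform_eq_mul_stdAddChar two hA₁ B₁ C₁ a₁ u₁ v₁
  refine ⟨κ - κ₁, fun b ↦ G b * conj (G₁ b), fun b s ↦ ?_, fun b ↦ ?_, ?_⟩
  · simp_rw [hG b s, hG₁ b s]
  · rw [norm_mul, RCLike.norm_conj]
    gcongr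
    exacts [norm_G b, norm_G₁ b]
  · simp_rw [sum_coprime_eq_sum_units, twistedKloostermanSum, Sform_eq, Sform_eq₁, map_mul,
      ← AddChar.map_neg_eq_conj, mul_mul_mul_comm, ← AddChar.map_add_eq_mul]
    congr! 3 with b
    push_cast
    ring

end NormalizedGaussSum

lemma rpow_correlation_bound_pow_four {q x y z : ℝ} (hq : 0 < q) (hz : 0 ≤ z) :
    (2 * x ^ (1 / 2 : ℝ) * y ^ (1 / 2 : ℝ) * z ^ (1 / 4 : ℝ) * q ^ (-5 / 4 : ℝ)) ^ 4 =
      16 * (√x / q * (√y / q)) ^ 4 * q ^ 3 * z := by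
  have z_pow : (z ^ (1 / 4 : ℝ)) ^ 4 = z := by
    rw [← Real.rpow_mul_natCast hz]
    norm_num
  have q_pow : (q ^ (-5 / 4 : ℝ)) ^ 4 = (q ^ 5)⁻¹ := by
    rw [← Real.rpow_mul_natCast hq.le, ← Real.rpow_natCast, ← Real.rpow_neg hq.le]
    norm_num
  simp only [mul_pow, div_pow, z_pow, q_pow, ← Real.sqrt_eq_rpow]
  field_simp
  ring

theorem gauss_sum_correlation_bound_general {p r : ℕ} (hp : p.Prime) (hodd : Odd p) (hr : 1 ≤ r)
    {A A₁ : ℤ} (hA : ¬ (p : ℤ) ∣ A) (hA₁ : ¬ (p : ℤ) ∣ A₁) (B C a u v B₁ C₁ a₁ u₁ v₁ : ℤ) :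
    ‖∑ b ∈ Icc 1 (p ^ r) with Nat.gcd b p = 1,
        Sform (p ^ r) A B C a b u v * conj (Sform (p ^ r) A₁ B₁ C₁ a₁ b u₁ v₁)‖ ≤
      2 * (Int.gcd (A * C - B ^ 2) ((p : ℤ) ^ r) : ℝ) ^ (1 / 2 : ℝ) *
        (Int.gcd (A₁ * C₁ - B₁ ^ 2) ((p : ℤ) ^ r) : ℝ) ^ (1 / 2 : ℝ) *
        (Int.gcd (a - a₁) ((p : ℤ) ^ r) : ℝ) ^ (1 / 4 : ℝ) * ((p : ℝ) ^ r) ^ (-5 / 4 : ℝ) := by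
  have := Fact.mk hp
  have : Fact (1 < p ^ r) := ⟨one_lt_pow₀ hp.one_lt (by lia)⟩
  have p_ne_two : p ≠ 2 := hodd.ne_two_of_dvd_nat dvd_rfl
  have q_pos : (0 : ℝ) < p ^ r := pow_pos (mod_cast hp.pos) r
  have coprime_iff (b : ℕ) : Nat.gcd b p = 1 ↔ b.Coprime (p ^ r) :=
    (Nat.coprime_pow_right_iff hr b p).symm
  obtain ⟨m, W, hsq, hW, sum_eq⟩ := exists_sum_Sform_mul_conj_eq_twistedKloostermanSum
    (isUnit_two_primePow p_ne_two r) (isUnit_intCast_primePow hA r)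
    (isUnit_intCast_primePow hA₁ r) B C a u v B₁ C₁ a₁ u₁ v₁
  obtain ⟨r, rfl⟩ := Nat.exists_eq_add_of_le' hr
  push_cast at hW
  simp_rw [coprime_iff]
  rw [sum_eq, ← pow_le_pow_iff_left₀ (norm_nonneg _) (by positivity) four_ne_zero,
    rpow_correlation_bound_pow_four q_pos (by positivity), ← Int.neg_gcd (a := a - a₁)]
  exact norm_twistedKloostermanSum_primePow_pow_four_le p_ne_two r hsq hW _ m

/-- Bound for the `b`-average of products of two normalized Gauss sums: for `q = p^r` odd
prime power, it is `≤ C gcd(a²,q)^{1/2} gcd(a₁²,q)^{1/2} gcd(a−a₁,q)^{1/4} q^{−5/4}`. -/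
theorem gauss_sum_correlation_bound :
    ∃ C₀ : ℝ, ∀ p r : ℕ, p.Prime → Odd p → 1 ≤ r →
      ∀ A B C A₁ B₁ C₁ a a₁ u v u₁ v₁ : ℤ,
        ¬ (p : ℤ) ∣ A → ¬ (p : ℤ) ∣ A₁ → a ≠ 0 → a₁ ≠ 0 →
        A * C - B ^ 2 = a ^ 2 → A₁ * C₁ - B₁ ^ 2 = a₁ ^ 2 →
        norm (∑ b ∈ (Finset.Icc 1 (p ^ r)).filter (fun b => Nat.gcd b p = 1),
            Sform (p ^ r) A B C a b u v *
              (starRingEnd ℂ) (Sform (p ^ r) A₁ B₁ C₁ a₁ b u₁ v₁))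
          ≤ C₀ * ((Int.gcd (a ^ 2) ((p : ℤ) ^ r) : ℝ)) ^ ((1 : ℝ) / 2) *
              ((Int.gcd (a₁ ^ 2) ((p : ℤ) ^ r) : ℝ)) ^ ((1 : ℝ) / 2) *
              ((Int.gcd (a - a₁) ((p : ℤ) ^ r) : ℝ)) ^ ((1 : ℝ) / 4) *
              ((p : ℝ) ^ r) ^ (-(5 : ℝ) / 4) :=
  ⟨2, fun _ _ hp hodd hr _ B C _ B₁ C₁ a a₁ u v u₁ v₁ hA hA₁ _ _ hdet hdet₁ ↦ hdet ▸ hdet₁ ▸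
    gauss_sum_correlation_bound_general hp hodd hr hA hA₁ B C a u v B₁ C₁ a₁ u₁ v₁⟩
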